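/- The subgroup of GL(2,ℂ) generated by the matrices g₂ and g₃ is isomorphic to SL(2, 𝔽₃); in particular, it is a finite group of order 24. -/

import Mathlib

/-!
The binary tetrahedral group has the presentation `⟨a, b | a⁴ = 1, a² = b³ = (ab)³⟩`. In any group,
elements `a`, `b` subject to these relations generate at most `24` elements, since left
multiplication by `a` and `b` permutes the four cosets `H`, `aH`, `baH`, `b⁻¹aH` of `H = ⟨b⟩`. If
moreover `a² ≠ 1`, there are exactly `24`: the order is divisible by `12`, and order `12` would make
`H` a subgroup of index two, whereas a group generated by such a pair has none. Two such pairs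
`(a, b)` and `(a', b')` therefore generate isomorphic groups, because `((a, a'), (b, b'))` is again
such a pair and both projections from the group it generates are bijective by counting. It remains
to exhibit such a pair in `SL(2, 𝔽₃)`, a group of order `24`, and to observe that
`g₂² = g₃³ = (g₂g₃)³ = -1`.
-/

noncomputable section

/-- ζ = (1 + √3·i)/2, a primitive sixth root of unity. -/
def ζ : ℂ := (1 + (Real.sqrt 3 : ℂ) * Complex.I) / 2

open Subgroup
open scoped Pointwise

section Group

variable {G G' : Type*} [Group G] [Group G']

theorem coe_closure_subset_of_smul_subset {S X : Set G} (hX : X.Finite) (one_mem : 1 ∈ X)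
    (smul_subset : ∀ s ∈ S, s • X ⊆ X) : (closure S : Set G) ⊆ X := by
  have closure_le_stabilizer : closure S ≤ MulAction.stabilizer G X :=
    (closure_le _).2 fun s hs =>
      (MulAction.mem_stabilizer_set_iff_smul_set_subset hX).2 (smul_subset s hs)
  intro g hg
  have smul_eq : g • X = X := closure_le_stabilizer hg
  rw [← smul_eq]
  exact ⟨1, one_mem, mul_one g⟩

theorem nonempty_mulEquiv_map_of_natCard_eq (f : G →* G') {K : Subgroup G} [Finite K]
    (h : Nat.card (K.map f) = Nat.card K) : Nonempty (K ≃* K.map f) :=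
  ⟨.ofBijective (f.subgroupMap K)
    ((f.subgroupMap_surjective K).bijective_of_nat_card_le h.ge)⟩

/-- A pair of elements satisfying the relations `a⁴ = 1`, `a² = b³ = (ab)³` that present the binary
tetrahedral group. Requiring the order of `a` to be exactly `4` excludes the pairs that generate a
proper quotient of that group. -/
structure IsBinaryTetrahedralPair (a b : G) : Prop where
  orderOf_left : orderOf a = 4
  cube_right : b ^ 3 = a ^ 2
  cube_mul : (a * b) ^ 3 = a ^ 2

namespace IsBinaryTetrahedralPair

variable {a b : G} {a' b' : G'}

theorem of_pow_eq_neg_one [HasDistribNeg G] (neg_one_ne_one : (-1 : G) ≠ 1) (ha : a ^ 2 = -1)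
    (hb : b ^ 3 = -1) (hab : (a * b) ^ 3 = -1) : IsBinaryTetrahedralPair a b where
  orderOf_left := by
    have ha4 : a ^ (2 * 2) = 1 := by rw [pow_mul, ha, neg_one_sq]
    exact orderOf_eq_prime_pow (p := 2) (n := 1) (by rwa [pow_one, ha]) ha4
  cube_right := hb.trans ha.symm
  cube_mul := hab.trans ha.symm

theorem prodMk (h : IsBinaryTetrahedralPair a b) (h' : IsBinaryTetrahedralPair a' b') :
    IsBinaryTetrahedralPair (a, a') (b, b') where
  orderOf_left := by rw [Prod.orderOf_mk, h.orderOf_left, h'.orderOf_left, Nat.lcm_self]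
  cube_right := Prod.ext h.cube_right h'.cube_right
  cube_mul := Prod.ext h.cube_mul h'.cube_mul

theorem orderOf_right (h : IsBinaryTetrahedralPair a b) : orderOf b = 6 := by
  have dvd_six : orderOf b ∣ 6 := by
    rw [orderOf_dvd_iff_pow_eq_one, pow_mul b 3 2, h.cube_right, ← pow_mul,
      ← orderOf_dvd_iff_pow_eq_one, h.orderOf_left]
  have not_dvd_three : ¬ orderOf b ∣ 3 := by
    rw [orderOf_dvd_iff_pow_eq_one, h.cube_right, ← orderOf_dvd_iff_pow_eq_one, h.orderOf_left]
    norm_num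
  have not_dvd_two : ¬ orderOf b ∣ 2 := by
    rw [orderOf_dvd_iff_pow_eq_one]
    intro b_sq
    have b_eq : b = a ^ 2 := by rw [← h.cube_right, pow_succ, b_sq, one_mul]
    have a_pow : a ^ 9 = a ^ 2 := by rw [← h.cube_mul, b_eq, ← pow_succ', ← pow_mul]
    rw [pow_inj_mod, h.orderOf_left] at a_pow
    norm_num at a_pow
  have le_six : orderOf b ≤ 6 := Nat.le_of_dvd (by norm_num) dvd_six
  interval_cases orderOf b <;> omega

theorem left_mul_right_mul_left (h : IsBinaryTetrahedralPair a b) :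
    a * (b * a) = b⁻¹ * a * b⁻¹ := by
  have conj_eq : b * (a * (b * a)) * b = a := by
    refine mul_left_cancel (a := a) ?_
    rw [← pow_two, ← h.cube_mul]
    simp only [pow_succ, pow_zero, one_mul, mul_assoc]
  calc a * (b * a) = b⁻¹ * (b * (a * (b * a)) * b) * b⁻¹ := by group
    _ = b⁻¹ * a * b⁻¹ := by rw [conj_eq]

theorem left_mul_inv_right_mul_left (h : IsBinaryTetrahedralPair a b) :
    a * (b⁻¹ * a) = b * a * b ^ 4 :=
  calc a * (b⁻¹ * a) = b * (b⁻¹ * a * b⁻¹) * a := by group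
    _ = b * a * b * a ^ 2 := by rw [← h.left_mul_right_mul_left, pow_two]; simp only [mul_assoc]
    _ = b * a * b ^ 4 := by rw [← h.cube_right, mul_assoc _ b, ← pow_succ']

theorem right_mul_right_mul_left (h : IsBinaryTetrahedralPair a b) :
    b * (b * a) = b⁻¹ * a * b ^ 3 :=
  calc b * (b * a) = b⁻¹ * (b ^ 3 * a) := by rw [pow_succ']; simp [pow_two, mul_assoc]
    _ = b⁻¹ * a * b ^ 3 := by rw [h.cube_right, ← pow_succ, pow_succ', mul_assoc]

theorem smul_cosets_subset (h : IsBinaryTetrahedralPair a b) :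
    ∀ s ∈ ({a, b} : Set G), s • (({1, a, b * a, b⁻¹ * a} : Set G) * (zpowers b : Set G)) ⊆
      {1, a, b * a, b⁻¹ * a} * (zpowers b : Set G) := by
  intro s hs
  have pow_mem (n : ℕ) : b ^ n ∈ (zpowers b : Set G) := npow_mem_zpowers b n
  suffices s • ({1, a, b * a, b⁻¹ * a} : Set G) ⊆
      {1, a, b * a, b⁻¹ * a} * (zpowers b : Set G) by
    grw [← smul_mul_assoc, this, mul_assoc, coe_mul_coe]
  rintro _ ⟨t, ht, rfl⟩
  simp only [Set.mem_insert_iff, Set.mem_singleton_iff] at hs ht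
  rcases hs with hs | hs <;> rcases ht with ht | ht | ht | ht <;> subst s t
  · exact ⟨a, by simp, 1, one_mem _, by simp⟩
  · exact ⟨1, by simp, b ^ 3, pow_mem 3, by simp [h.cube_right, pow_two]⟩
  · exact ⟨b⁻¹ * a, by simp, b⁻¹, inv_mem (mem_zpowers b), h.left_mul_right_mul_left.symm⟩
  · exact ⟨b * a, by simp, b ^ 4, pow_mem 4, h.left_mul_inv_right_mul_left.symm⟩
  · exact ⟨1, by simp, b, mem_zpowers b, by simp⟩
  · exact ⟨b * a, by simp, 1, one_mem _, by simp⟩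
  · exact ⟨b⁻¹ * a, by simp, b ^ 3, pow_mem 3, h.right_mul_right_mul_left.symm⟩
  · exact ⟨a, by simp, 1, one_mem _, by simp⟩

theorem finite_cosets (h : IsBinaryTetrahedralPair a b) :
    (({1, a, b * a, b⁻¹ * a} : Set G) * (zpowers b : Set G)).Finite :=
  (Set.toFinite _).mul
    (finite_zpowers.2 (orderOf_pos_iff.1 (by rw [h.orderOf_right]; norm_num)))

theorem coe_closure_subset_cosets (h : IsBinaryTetrahedralPair a b) :
    (closure {a, b} : Set G) ⊆ {1, a, b * a, b⁻¹ * a} * (zpowers b : Set G) :=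
  coe_closure_subset_of_smul_subset h.finite_cosets ⟨1, by simp, 1, one_mem _, one_mul 1⟩
    h.smul_cosets_subset

theorem finite_closure (h : IsBinaryTetrahedralPair a b) : Finite (closure {a, b}) :=
  h.finite_cosets.subset h.coe_closure_subset_cosets

theorem natCard_closure_le (h : IsBinaryTetrahedralPair a b) : Nat.card (closure {a, b}) ≤ 24 := by
  have card_reps : Nat.card ({1, a, b * a, b⁻¹ * a} : Set G) ≤ 4 := by
    classical
    simpa [← Set.ncard_coe_finset] using Finset.card_le_four (a := 1) (b := a) (c := b * a)
  calc Nat.card (closure {a, b})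
      ≤ Nat.card (({1, a, b * a, b⁻¹ * a} : Set G) * (zpowers b : Set G) : Set G) :=
        Nat.card_mono h.finite_cosets h.coe_closure_subset_cosets
    _ ≤ Nat.card ({1, a, b * a, b⁻¹ * a} : Set G) * Nat.card (zpowers b) := Set.natCard_mul_le
    _ ≤ 4 * 6 := by rw [Nat.card_zpowers, h.orderOf_right]; gcongr

theorem left_mem_and_right_mem_of_index_eq_two (h : IsBinaryTetrahedralPair a b) {H : Subgroup G}
    (hH : H.index = 2) : a ∈ H ∧ b ∈ H := by
  have mem_of_cube_eq {x : G} (hx : x ^ 3 = a ^ 2) : x ∈ H := by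
    have cube_mem : x ^ 3 ∈ H := hx ▸ sq_mem_of_index_two hH a
    rwa [pow_succ, H.mul_mem_cancel_left (sq_mem_of_index_two hH x)] at cube_mem
  have hb : b ∈ H := mem_of_cube_eq h.cube_right
  exact ⟨(H.mul_mem_cancel_right hb).1 (mem_of_cube_eq h.cube_mul), hb⟩

theorem relIndex_closure_ne_two (h : IsBinaryTetrahedralPair a b) (H : Subgroup G) :
    H.relIndex (closure {a, b}) ≠ 2 := by
  intro index_eq_two
  have pair_in_closure : IsBinaryTetrahedralPair
      (⟨a, mem_closure_of_mem (by simp)⟩ : closure {a, b}) ⟨b, mem_closure_of_mem (by simp)⟩ :=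
    ⟨(orderOf_mk _ _).trans h.orderOf_left, Subtype.ext h.cube_right, Subtype.ext h.cube_mul⟩
  obtain ⟨ha, hb⟩ := pair_in_closure.left_mem_and_right_mem_of_index_eq_two index_eq_two
  have closure_le_H : closure {a, b} ≤ H := (closure_le H).2 (Set.pair_subset ha hb)
  simp [relIndex_eq_one.2 closure_le_H] at index_eq_two

theorem natCard_closure (h : IsBinaryTetrahedralPair a b) : Nat.card (closure {a, b}) = 24 := by
  have : Finite (closure {a, b}) := h.finite_closure
  have four_dvd : 4 ∣ Nat.card (closure {a, b}) := by
    rw [← h.orderOf_left]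
    exact (closure {a, b}).orderOf_dvd_natCard (subset_closure (by simp))
  have zpowers_le : zpowers b ≤ closure {a, b} := zpowers_le.2 (subset_closure (by simp))
  have six_mul_index : 6 * (zpowers b).relIndex (closure {a, b}) = Nat.card (closure {a, b}) := by
    rw [← h.orderOf_right, ← Nat.card_zpowers, ← relIndex_bot_left, ← relIndex_bot_left,
      relIndex_mul_relIndex _ _ _ bot_le zpowers_le]
  have index_ne_two := h.relIndex_closure_ne_two (zpowers b)
  have card_pos : 0 < Nat.card (closure {a, b}) := Nat.card_pos
  have card_le := h.natCard_closure_le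
  omega

theorem nonempty_closure_mulEquiv_closure_map {f : G →* G'} (h : IsBinaryTetrahedralPair a b)
    (hf : IsBinaryTetrahedralPair (f a) (f b)) :
    Nonempty (closure {a, b} ≃* closure {f a, f b}) := by
  have : Finite (closure {a, b}) := h.finite_closure
  have map_closure_eq : (closure {a, b}).map f = closure {f a, f b} := by
    rw [MonoidHom.map_closure, Set.image_pair]
  rw [← map_closure_eq]
  apply nonempty_mulEquiv_map_of_natCard_eq
  rw [map_closure_eq, hf.natCard_closure, h.natCard_closure]

theorem nonempty_closure_mulEquiv_closure (h : IsBinaryTetrahedralPair a b)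
    (h' : IsBinaryTetrahedralPair a' b') : Nonempty (closure {a, b} ≃* closure {a', b'}) := by
  obtain ⟨e⟩ :=
    (h.prodMk h').nonempty_closure_mulEquiv_closure_map (f := MonoidHom.fst G G') h
  obtain ⟨e'⟩ :=
    (h.prodMk h').nonempty_closure_mulEquiv_closure_map (f := MonoidHom.snd G G') h'
  exact ⟨e.symm.trans e'⟩

end IsBinaryTetrahedralPair

end Group

section Matrix

theorem matrix_fin_two_eq_neg_one_iff {R : Type*} [Ring R] {a b c d : R} :
    !![a, b; c, d] = -1 ↔ a = -1 ∧ b = 0 ∧ c = 0 ∧ d = -1 := by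
  simp [← Matrix.ext_iff, Fin.forall_fin_two, and_assoc]

variable {R : Type*} [CommRing R] {z : R}

/-- The matrix `g₂`, with the primitive sixth root of unity `ζ` replaced by an element `z` of any
commutative ring, so that `g₂ (-1)` over `ZMod 3` is its reduction modulo `√-3`. -/
def g₂ (z : R) : Matrix (Fin 2) (Fin 2) R := !![z, -1; z, -z]

/-- The matrix `g₃`, with `ζ` replaced by an element `z` of any commutative ring as in `g₂`. -/
def g₃ (z : R) : Matrix (Fin 2) (Fin 2) R := !![0, z - 1; 1 - z, z - 1]

theorem g₂_sq (hz : z ^ 2 = z - 1) : g₂ z ^ 2 = -1 := by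
  rw [g₂, pow_two, Matrix.mul_fin_two, matrix_fin_two_eq_neg_one_iff]
  grind

theorem g₃_cube (hz : z ^ 2 = z - 1) : g₃ z ^ 3 = -1 := by
  rw [g₃, pow_three, Matrix.mul_fin_two, Matrix.mul_fin_two, matrix_fin_two_eq_neg_one_iff]
  grind

theorem g₂_mul_g₃_cube (hz : z ^ 2 = z - 1) : (g₂ z * g₃ z) ^ 3 = -1 := by
  rw [g₂, g₃, pow_three]
  simp only [Matrix.mul_fin_two, matrix_fin_two_eq_neg_one_iff]
  grind

theorem exists_isBinaryTetrahedralPair_generalLinearGroup (h2 : (2 : R) ≠ 0)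
    (hz : z ^ 2 = z - 1) : ∃ a b : Matrix.GeneralLinearGroup (Fin 2) R,
      (a : Matrix (Fin 2) (Fin 2) R) = g₂ z ∧ (b : Matrix (Fin 2) (Fin 2) R) = g₃ z ∧
        IsBinaryTetrahedralPair a b := by
  obtain ⟨a, ha⟩ : IsUnit (g₂ z) := (isUnit_pow_iff (by norm_num)).1 (g₂_sq hz ▸ isUnit_one.neg)
  obtain ⟨b, hb⟩ : IsUnit (g₃ z) := (isUnit_pow_iff (by norm_num)).1 (g₃_cube hz ▸ isUnit_one.neg)
  have neg_one_ne_one : (-1 : Matrix.GeneralLinearGroup (Fin 2) R) ≠ 1 := by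
    intro h
    have coe_eq : (-1 : Matrix (Fin 2) (Fin 2) R) = 1 := Units.ext_iff.1 h
    have entry_eq : (-1 : R) = 1 := by simpa using congrFun₂ coe_eq 0 0
    exact h2 (by linear_combination -entry_eq)
  refine ⟨a, b, ha, hb, .of_pow_eq_neg_one neg_one_ne_one ?_ ?_ ?_⟩
  · exact Units.ext (by simpa [ha] using g₂_sq hz)
  · exact Units.ext (by simpa [hb] using g₃_cube hz)
  · exact Units.ext (by simpa [ha, hb] using g₂_mul_g₃_cube hz)

theorem exists_isBinaryTetrahedralPair_specialLinearGroup :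
    ∃ a b : Matrix.SpecialLinearGroup (Fin 2) (ZMod 3), IsBinaryTetrahedralPair a b := by
  have hz : (-1 : ZMod 3) ^ 2 = -1 - 1 := by decide
  exact ⟨⟨g₂ (-1), by decide⟩, ⟨g₃ (-1), by decide⟩, .of_pow_eq_neg_one (by decide)
    (Subtype.ext (g₂_sq hz)) (Subtype.ext (g₃_cube hz)) (Subtype.ext (g₂_mul_g₃_cube hz))⟩

theorem natCard_specialLinearGroup_two_zmod_three :
    Nat.card (Matrix.SpecialLinearGroup (Fin 2) (ZMod 3)) = 24 := by
  rw [Nat.card_eq_fintype_card]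
  decide +kernel

theorem IsBinaryTetrahedralPair.nonempty_closure_mulEquiv_specialLinearGroup {G : Type*} [Group G]
    {a b : G} (h : IsBinaryTetrahedralPair a b) :
    Nonempty (closure {a, b} ≃* Matrix.SpecialLinearGroup (Fin 2) (ZMod 3)) := by
  obtain ⟨a', b', h'⟩ := exists_isBinaryTetrahedralPair_specialLinearGroup
  obtain ⟨e⟩ := h.nonempty_closure_mulEquiv_closure h'
  have closure_eq_top : Subgroup.closure {a', b'} = ⊤ :=
    eq_top_of_card_eq _ (h'.natCard_closure.trans natCard_specialLinearGroup_two_zmod_three.symm)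
  exact ⟨e.trans ((MulEquiv.subgroupCongr closure_eq_top).trans topEquiv)⟩

theorem stmt11_general (h2 : (2 : R) ≠ 0) (hz : z ^ 2 = z - 1) :
    ∃ G2 G3 : Matrix.GeneralLinearGroup (Fin 2) R,
      (G2 : Matrix (Fin 2) (Fin 2) R) = !![z, -1; z, -z] ∧
      (G3 : Matrix (Fin 2) (Fin 2) R) = !![0, z - 1; 1 - z, z - 1] ∧
      Nonempty
        ((Subgroup.closure {G2, G3}) ≃* Matrix.SpecialLinearGroup (Fin 2) (ZMod 3)) ∧
      Nat.card (Subgroup.closure {G2, G3}) = 24 := by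
  obtain ⟨a, b, ha, hb, h⟩ := exists_isBinaryTetrahedralPair_generalLinearGroup h2 hz
  exact ⟨a, b, ha, hb, h.nonempty_closure_mulEquiv_specialLinearGroup, h.natCard_closure⟩

end Matrix

theorem ζ_sq : ζ ^ 2 = ζ - 1 := by
  have sqrt_three_sq : (Real.sqrt 3 : ℂ) ^ 2 = 3 := by
    rw [← Complex.ofReal_pow, Real.sq_sqrt (by norm_num)]
    norm_num
  rw [ζ]
  linear_combination (Complex.I ^ 2 * sqrt_three_sq + 3 * Complex.I_sq) / 4

/-- The subgroup of GL(2,ℂ) generated by g₂ = [[ζ,−1],[ζ,−ζ]] and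
g₃ = [[0,ζ−1],[1−ζ,ζ−1]] is isomorphic to SL(2,𝔽₃); in particular it has order 24. -/
theorem stmt11 :
    ∃ G2 G3 : Matrix.GeneralLinearGroup (Fin 2) ℂ,
      (G2 : Matrix (Fin 2) (Fin 2) ℂ) = !![ζ, -1; ζ, -ζ] ∧
      (G3 : Matrix (Fin 2) (Fin 2) ℂ) = !![0, ζ - 1; 1 - ζ, ζ - 1] ∧
      Nonempty
        ((Subgroup.closure {G2, G3}) ≃* Matrix.SpecialLinearGroup (Fin 2) (ZMod 3)) ∧
      Nat.card (Subgroup.closure {G2, G3}) = 24 :=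
  stmt11_general two_ne_zero ζ_sq
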